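/- Let N = n+1 ≥ 3. Then the normalized volume of the adjacency polytope of the cycle graph C_N equals the adjacency polytope bound: n! · vol(conv(S)) = N · C(N−1, ⌊(N−1)/2⌋), where vol denotes the n-dimensional Lebesgue measure on ℝ^n and C(·,·) the binomial coefficient. -/

import Mathlib

open Finset MeasureTheory

/-- `eVec n k` is the standard basis vector `e_k` of `ℝ^n` for `1 ≤ k ≤ n`,
with the convention `e_0 = e_{n+1} = 0`. -/
noncomputable def eVec (n : ℕ) (k : ℕ) : Fin n → ℝ := fun t => if (t : ℕ) + 1 = k then 1 else 0

/-- `dVec n i = e_{i-1} - e_i`. -/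
noncomputable def dVec (n : ℕ) (i : ℕ) : Fin n → ℝ := eVec n (i - 1) - eVec n i

/-- The point configuration `S = {0} ∪ {±(e_{i-1} - e_i) : 1 ≤ i ≤ N}`, whose convex
hull is the adjacency polytope of the cycle graph `C_N`. -/
noncomputable def Sconf (n N : ℕ) : Set (Fin n → ℝ) :=
  insert 0 {x | ∃ i ∈ Finset.Icc 1 N, x = dVec n i ∨ x = -dVec n i}

/-!
Since the `n + 1` vectors `d_i = e_{i-1} - e_i` sum to zero, the adjacency polytope is, up to a
unimodular map, the image `Q` of the `ℓ¹` unit ball of `ℝ^(n+1)` in the quotient by the constant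
vectors. A vector lies over `Q` exactly when its `ℓ¹` distance to its own median is at most `1`.
Sorting by which of the `n + 1` coordinates is the median cuts `Q` into `n + 1` cells; taking the
median coordinate as the origin identifies each of them with the part of the `n`-dimensional
cross-polytope where exactly `⌊n/2⌋` coordinates are negative. That part consists of `C(n, ⌊n/2⌋)`
of the `2^n` congruent orthants of the cross-polytope, each of volume `1 / n!`.
-/

open scoped Nat ENNReal

section EntryRank

variable {κ α : Type*} [Fintype κ] [LinearOrder α]

/-- The rank of the entry `y k` in the vector `y`: the number of entries strictly below it. -/
def entryRank (y : κ → α) (k : κ) : ℕ := #{i | y i < y k}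

lemma entryRank_lt_entryRank {y : κ → α} {k l : κ} (h : y k < y l) :
    entryRank y k < entryRank y l := by
  refine card_lt_card (ssubset_iff_of_subset ?_ |>.2 ⟨k, by simpa using h, by simp⟩)
  exact monotone_filter_right _ fun i _ hi => lt_trans hi h

lemma eq_of_entryRank_eq {y : κ → α} {k l : κ} (h : entryRank y k = entryRank y l) : y k = y l :=
  le_antisymm (not_lt.1 fun hlt => (entryRank_lt_entryRank hlt).ne' h)
    (not_lt.1 fun hlt => (entryRank_lt_entryRank hlt).ne h)

lemma entryRank_lt_card (y : κ → α) (k : κ) : entryRank y k < Fintype.card κ :=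
  card_lt_univ_of_notMem (x := k) (by simp)

lemma exists_entryRank_eq {y : κ → α} (hy : Function.Injective y) {m : ℕ}
    (hm : m < Fintype.card κ) : ∃ k, entryRank y k = m := by
  have hinj : Function.Injective (entryRank y) := fun _ _ h => hy (eq_of_entryRank_eq h)
  have himage : univ.image (entryRank y) = range (Fintype.card κ) := by
    refine eq_of_subset_of_card_le (fun r hr => ?_) ?_
    · obtain ⟨k, -, rfl⟩ := mem_image.1 hr
      exact mem_range.2 (entryRank_lt_card y k)
    · rw [card_image_of_injective _ hinj, card_range, card_univ]
  obtain ⟨k, -, hk⟩ := mem_image.1 (himage ▸ mem_range.2 hm)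
  exact ⟨k, hk⟩

lemma entryRank_comp_equiv (y : κ → α) (σ : Equiv.Perm κ) (k : κ) :
    entryRank (y ∘ σ) k = entryRank y (σ k) :=
  card_equiv σ (by simp)

lemma entryRank_comp_strictMono {β : Type*} [LinearOrder β] {f : α → β} (hf : StrictMono f)
    (y : κ → α) (k : κ) : entryRank (f ∘ y) k = entryRank y k := by
  simp only [entryRank, Function.comp_apply, hf.lt_iff_lt]

end EntryRank

section Median

variable {κ R : Type*} [Fintype κ] [CommRing R] [LinearOrder R] [IsStrictOrderedRing R] {y : κ → R}

lemma sum_abs_sub_le_of_le {m t : R} (htm : t ≤ m) (hm : 2 * #{i | y i < m} ≤ Fintype.card κ) :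
    ∑ i, |y i - m| ≤ ∑ i, |y i - t| := by
  have hterm (i : κ) :
      |y i - m| ≤ |y i - t| + (m - t) * (2 * (if y i < m then 1 else 0) - 1) := by
    split_ifs with h
    · rw [abs_of_neg (sub_neg.2 h)]
      linarith [neg_abs_le (y i - t)]
    · rw [abs_of_nonneg (sub_nonneg.2 (not_lt.1 h))]
      linarith [le_abs_self (y i - t)]
  have hm' : 2 * (#{i | y i < m} : R) - Fintype.card κ ≤ 0 := sub_nonpos.2 (mod_cast hm)
  calc ∑ i, |y i - m|
      ≤ ∑ i, (|y i - t| + (m - t) * (2 * (if y i < m then 1 else 0) - 1)) :=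
        sum_le_sum fun i _ => hterm i
    _ = ∑ i, |y i - t| + (m - t) * (2 * #{i | y i < m} - Fintype.card κ) := by
        rw [sum_add_distrib, ← mul_sum, sum_sub_distrib, ← mul_sum, sum_boole, sum_const,
          card_univ, nsmul_one]
    _ ≤ ∑ i, |y i - t| :=
        add_le_of_nonpos_right (mul_nonpos_of_nonneg_of_nonpos (sub_nonneg.2 htm) hm')

lemma sum_abs_sub_median_le {m : R} (hlt : 2 * #{i | y i < m} ≤ Fintype.card κ)
    (hgt : 2 * #{i | m < y i} ≤ Fintype.card κ) (t : R) :
    ∑ i, |y i - m| ≤ ∑ i, |y i - t| := by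
  rcases le_total t m with htm | hmt
  · exact sum_abs_sub_le_of_le htm hlt
  · have hneg := sum_abs_sub_le_of_le (y := -y) (neg_le_neg hmt) (by simpa using hgt)
    simpa only [Pi.neg_apply, neg_sub_neg, abs_sub_comm] using hneg

lemma sum_abs_sub_le_of_entryRank {k : κ} (hle : 2 * entryRank y k ≤ Fintype.card κ)
    (hge : Fintype.card κ ≤ 2 * entryRank y k + 2) (t : R) :
    ∑ i, |y i - y k| ≤ ∑ i, |y i - t| := by
  have hcard : #{i | y k < y i} + entryRank y k < Fintype.card κ := by
    classical
    rw [entryRank, ← card_union_of_disjoint]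
    · exact card_lt_univ_of_notMem (x := k) (by simp)
    · exact disjoint_filter.2 fun i _ h => h.not_gt
  exact sum_abs_sub_median_le hle (by lia) t

end Median

section CrossPolytope

/-- The unit ball of the `ℓ¹` norm, i.e. the cross-polytope. -/
def l1Ball (ι : Type*) [Fintype ι] : Set (ι → ℝ) := {u | ∑ i, |u i| ≤ 1}

variable {ι : Type*} [Fintype ι]

lemma convex_l1Ball : Convex ℝ (l1Ball ι) := by
  have hball : l1Ball ι =
      (WithLp.linearEquiv 1 ℝ (ι → ℝ)).symm ⁻¹' Metric.closedBall 0 1 := by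
    ext u
    simp [l1Ball, PiLp.norm_eq_of_L1]
  rw [hball]
  exact (convex_closedBall _ _).linear_preimage (WithLp.linearEquiv 1 ℝ (ι → ℝ)).symm.toLinearMap

lemma measurableSet_l1Ball : MeasurableSet (l1Ball ι) :=
  measurableSet_le (by fun_prop) measurable_const

lemma volume_l1Ball : volume (l1Ball ι) = 2 ^ Fintype.card ι * ((Fintype.card ι)! : ℝ≥0∞)⁻¹ := by
  cases isEmpty_or_nonempty ι
  · simp [l1Ball, volume_pi]
  · have hvol := volume_sum_rpow_le (ι := ι) (p := 1) le_rfl 1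
    simpa [l1Ball, Real.Gamma_nat_eq_factorial, Real.Gamma_two, one_add_one_eq_two,
      ENNReal.ofReal_div_of_pos, ENNReal.ofReal_pow, Nat.factorial_pos, div_eq_mul_inv] using hvol

/-- The set of coordinates at which `u` is negative. -/
noncomputable def negSupport (u : ι → ℝ) : Finset ι := {i | u i < 0}

@[simp] lemma mem_negSupport {u : ι → ℝ} {i : ι} : i ∈ negSupport u ↔ u i < 0 :=
  mem_filter_univ i

lemma measurableSet_negSupport_fiber (A : Finset ι) :
    MeasurableSet (negSupport ⁻¹' {A}) := by
  have hfiber : negSupport ⁻¹' {A} = {u | ∀ i, u i < 0 ↔ i ∈ A} := by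
    ext u
    simp [Finset.ext_iff]
  rw [hfiber]
  measurability

/-- Flipping the signs of the coordinates in `A`. -/
def signFlip [DecidableEq ι] (A : Finset ι) (u : ι → ℝ) : ι → ℝ :=
  fun i => if i ∈ A then -u i else u i

lemma signFlip_mem_l1Ball [DecidableEq ι] {A : Finset ι} {u : ι → ℝ} :
    signFlip A u ∈ l1Ball ι ↔ u ∈ l1Ball ι := by
  simp only [l1Ball, signFlip, Set.mem_ofPred_eq, apply_ite abs, abs_neg, ite_self]

lemma measurePreserving_signFlip [DecidableEq ι] (A : Finset ι) :
    MeasurePreserving (signFlip A) := by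
  refine volume_preserving_pi (f := fun i t => if i ∈ A then -t else t) fun i => ?_
  split_ifs
  · exact Measure.measurePreserving_neg volume
  · exact MeasurePreserving.id volume

lemma negSupport_signFlip_eq_empty [DecidableEq ι] {A : Finset ι} {u : ι → ℝ}
    (hu : ∀ i, u i ≠ 0) :
    negSupport (signFlip A u) = ∅ ↔ negSupport u = A := by
  simp only [Finset.ext_iff, mem_negSupport, notMem_empty, iff_false, signFlip]
  refine forall_congr' fun i => ?_
  by_cases hi : i ∈ A
  · simp [hi, (hu i).le_iff_lt]
  · simp [hi]

lemma ae_forall_ne_zero : ∀ᵐ u : ι → ℝ, ∀ i, u i ≠ 0 :=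
  ae_all_iff.2 fun i =>
    (Measure.quasiMeasurePreserving_eval (fun _ : ι => (volume : Measure ℝ)) i).ae
      (Measure.ae_ne volume 0)

lemma volume_negSupport_fiber_inter_l1Ball_eq_fiber_empty (A : Finset ι) :
    volume (negSupport ⁻¹' {A} ∩ l1Ball ι) = volume (negSupport ⁻¹' {∅} ∩ l1Ball ι) := by
  classical
  have hflip : (signFlip A ⁻¹' (negSupport ⁻¹' {∅} ∩ l1Ball ι) : Set (ι → ℝ)) =ᵐ[volume]
      (negSupport ⁻¹' {A} ∩ l1Ball ι : Set (ι → ℝ)) := by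
    refine Filter.eventuallyEq_set.2 ?_
    filter_upwards [ae_forall_ne_zero] with u hu
    exact and_congr (negSupport_signFlip_eq_empty hu) signFlip_mem_l1Ball
  rw [← measure_congr hflip, (measurePreserving_signFlip A).measure_preimage
    ((measurableSet_negSupport_fiber ∅).inter measurableSet_l1Ball).nullMeasurableSet]

lemma sum_volume_negSupport_fiber_inter_l1Ball (s : Finset (Finset ι)) :
    ∑ A ∈ s, volume (negSupport ⁻¹' {A} ∩ l1Ball ι) =
      volume {u ∈ l1Ball ι | negSupport u ∈ s} := by
  have hsum := sum_measure_preimage_singleton (μ := volume.restrict (l1Ball ι)) s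
    fun A _ => measurableSet_negSupport_fiber A
  simp only [Measure.restrict_apply' measurableSet_l1Ball] at hsum
  rw [hsum, Set.inter_comm]
  rfl

lemma volume_negSupport_fiber_inter_l1Ball (A : Finset ι) :
    volume (negSupport ⁻¹' {A} ∩ l1Ball ι) = ((Fintype.card ι)! : ℝ≥0∞)⁻¹ := by
  have hsum := sum_volume_negSupport_fiber_inter_l1Ball (univ : Finset (Finset ι))
  simp only [volume_negSupport_fiber_inter_l1Ball_eq_fiber_empty, mem_univ, and_true,
    Set.ofPred_mem_eq, volume_l1Ball, sum_const, card_univ, Fintype.card_finset, nsmul_eq_mul,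
    Nat.cast_pow, Nat.cast_ofNat] at hsum
  rw [volume_negSupport_fiber_inter_l1Ball_eq_fiber_empty]
  exact (ENNReal.mul_right_inj (by simp) (by simp)).1 hsum

lemma volume_l1Ball_card_negSupport (h : ℕ) :
    volume {u ∈ l1Ball ι | #(negSupport u) = h} =
      (Fintype.card ι).choose h * ((Fintype.card ι)! : ℝ≥0∞)⁻¹ := by
  have hsum := sum_volume_negSupport_fiber_inter_l1Ball (powersetCard h (univ : Finset ι))
  simp only [volume_negSupport_fiber_inter_l1Ball, mem_powersetCard_univ, sum_const,
    card_powersetCard, card_univ, nsmul_eq_mul] at hsum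
  exact hsum.symm

end CrossPolytope

section HaarMeasure

variable {E : Type*} [NormedAddCommGroup E] [NormedSpace ℝ E] [MeasurableSpace E] [BorelSpace E]
  [FiniteDimensional ℝ E] (μ : Measure E) [μ.IsAddHaarMeasure]

lemma addHaar_preimage_of_involutive {f : E →ₗ[ℝ] E} (hf : Function.Involutive f) (s : Set E) :
    μ (f ⁻¹' s) = μ s := by
  have hdet : LinearMap.det f * LinearMap.det f = 1 := by
    rw [← LinearMap.det_comp, show f ∘ₗ f = LinearMap.id from LinearMap.ext hf, LinearMap.det_id]
  have habs : |LinearMap.det f| = 1 := by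
    rcases mul_self_eq_one_iff.1 hdet with h | h <;> simp [h]
  rw [Measure.addHaar_preimage_linearMap μ (left_ne_zero_of_mul_eq_one hdet), abs_inv, habs,
    inv_one, ENNReal.ofReal_one, one_mul]

lemma ae_linearMap_ne_zero {f : E →ₗ[ℝ] ℝ} (hf : f ≠ 0) : ∀ᵐ x ∂μ, f x ≠ 0 := by
  have hker : μ f.ker = 0 := Measure.addHaar_submodule μ f.ker (by simpa using hf)
  simp only [ae_iff, not_not]
  exact hker

end HaarMeasure

section Cells

variable {ι : Type*}

/-- The vector `x` with an additional zero coordinate, indexed by `none`. -/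
noncomputable def zeroExtend : (ι → ℝ) →ₗ[ℝ] Option ι → ℝ :=
  LinearMap.pi fun o => o.elim 0 LinearMap.proj

@[simp] lemma zeroExtend_none (x : ι → ℝ) : zeroExtend x none = 0 := rfl

@[simp] lemma zeroExtend_some (x : ι → ℝ) (i : ι) : zeroExtend x (some i) = x i := rfl

/-- The linear change of coordinates that makes `k` the coordinate normalised to zero: it exchanges
the coordinates `none` and `k` of `zeroExtend x` and subtracts a constant. -/
noncomputable def recenter [DecidableEq ι] (k : Option ι) : (ι → ℝ) →ₗ[ℝ] ι → ℝ :=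
  LinearMap.pi fun i =>
    LinearMap.proj (Equiv.swap none k (some i)) ∘ₗ zeroExtend - LinearMap.proj k ∘ₗ zeroExtend

lemma zeroExtend_recenter [DecidableEq ι] (k : Option ι) (x : ι → ℝ) :
    zeroExtend (recenter k x) =
      (fun r => r - zeroExtend x k) ∘ zeroExtend x ∘ Equiv.swap none k := by
  ext (_ | i)
  · simp
  · simp [recenter]

lemma recenter_involutive [DecidableEq ι] (k : Option ι) : Function.Involutive (recenter k) := by
  intro x
  ext i
  rw [← zeroExtend_some (recenter k _), zeroExtend_recenter, zeroExtend_recenter]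
  simp

variable [Fintype ι]

/-- The image of the `ℓ¹` ball of `Option ι → ℝ` in the quotient by the constant vectors, in
coordinates representing each class by its member that vanishes at `none`. -/
def l1BallModConst (ι : Type*) [Fintype ι] : Set (ι → ℝ) :=
  {x | ∃ t, ∑ o, |zeroExtend x o - t| ≤ 1}

/-- The vectors `x` for which the coordinate `k` of `zeroExtend x` has rank `h` and lies at `ℓ¹`
distance at most `1` from `zeroExtend x`. -/
def rankCell (h : ℕ) (k : Option ι) : Set (ι → ℝ) :=
  {x | entryRank (zeroExtend x) k = h ∧ ∑ o, |zeroExtend x o - zeroExtend x k| ≤ 1}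

lemma rankCell_none (h : ℕ) :
    rankCell h none = {u ∈ l1Ball ι | #(negSupport u) = h} := by
  ext u
  have hrank : entryRank (zeroExtend u) none = #(negSupport u) := by
    have hmap : ({o | zeroExtend u o < zeroExtend u none} : Finset (Option ι)) =
        (negSupport u).map Function.Embedding.some := by
      ext (_ | i) <;> rw [mem_filter_univ] <;> simp
    rw [entryRank, hmap, card_map]
  simp [rankCell, l1Ball, hrank, Fintype.sum_option, and_comm]

lemma measurableSet_rankCell (h : ℕ) (k : Option ι) : MeasurableSet (rankCell h k) := by
  have hcoord (o : Option ι) : Measurable fun x : ι → ℝ => zeroExtend x o :=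
    (measurable_pi_apply o).comp zeroExtend.continuous_of_finiteDimensional.measurable
  have hrank : Measurable fun x : ι → ℝ => entryRank (zeroExtend x) k := by
    simp only [entryRank, card_filter]
    exact Finset.measurable_sum _ fun o _ =>
      Measurable.ite (measurableSet_lt (hcoord o) (hcoord k)) measurable_const measurable_const
  have hdist : Measurable fun x : ι → ℝ => ∑ o, |zeroExtend x o - zeroExtend x k| := by fun_prop
  exact (hrank (measurableSet_singleton h)).inter (measurableSet_le hdist measurable_const)

lemma recenter_preimage_rankCell [DecidableEq ι] (h : ℕ) (k : Option ι) :
    recenter k ⁻¹' rankCell h none = rankCell h k := by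
  ext x
  have hrank : entryRank (zeroExtend (recenter k x)) none = entryRank (zeroExtend x) k := by
    rw [zeroExtend_recenter, entryRank_comp_strictMono fun _ _ hab => sub_lt_sub_right hab _,
      entryRank_comp_equiv, Equiv.swap_apply_left]
  have hsum : ∑ o, |zeroExtend (recenter k x) o| = ∑ o, |zeroExtend x o - zeroExtend x k| := by
    rw [zeroExtend_recenter]
    exact Equiv.sum_comp (Equiv.swap none k) fun o => |zeroExtend x o - zeroExtend x k|
  simp only [rankCell, Set.mem_preimage, Set.mem_ofPred_eq, zeroExtend_none, sub_zero, hrank, hsum]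

lemma volume_rankCell (h : ℕ) (k : Option ι) :
    volume (rankCell h k) = (Fintype.card ι).choose h * ((Fintype.card ι)! : ℝ≥0∞)⁻¹ := by
  classical
  rw [← recenter_preimage_rankCell, addHaar_preimage_of_involutive volume (recenter_involutive k),
    rankCell_none, volume_l1Ball_card_negSupport]

lemma ae_zeroExtend_ne {k l : Option ι} (hkl : k ≠ l) :
    ∀ᵐ x : ι → ℝ, zeroExtend x k ≠ zeroExtend x l := by
  classical
  have hne : LinearMap.proj k ∘ₗ zeroExtend - LinearMap.proj l ∘ₗ zeroExtend ≠
      (0 : (ι → ℝ) →ₗ[ℝ] ℝ) := by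
    intro h0
    rcases k with _ | a <;> rcases l with _ | b
    · exact hkl rfl
    · simpa using LinearMap.congr_fun h0 fun _ => 1
    · simpa using LinearMap.congr_fun h0 fun _ => 1
    · have hab : a ≠ b := fun hab => hkl (congrArg some hab)
      simpa [hab] using LinearMap.congr_fun h0 (Pi.single b 1)
  filter_upwards [ae_linearMap_ne_zero volume hne] with x hx
  exact sub_ne_zero.1 hx

lemma ae_injective_zeroExtend : ∀ᵐ x : ι → ℝ, Function.Injective (zeroExtend x) := by
  have hne : ∀ᵐ x : ι → ℝ, ∀ k l, k ≠ l → zeroExtend x k ≠ zeroExtend x l := by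
    simp only [ae_all_iff]
    exact fun k l => ae_zeroExtend_ne
  filter_upwards [hne] with x hx k l
  exact not_imp_not.1 (hx k l)

lemma aedisjoint_rankCell {h : ℕ} {k l : Option ι} (hkl : k ≠ l) :
    AEDisjoint volume (rankCell h k) (rankCell h l) := by
  refine measure_mono_null (fun x hx => ?_) (ae_iff.1 (ae_zeroExtend_ne hkl))
  exact not_not.2 (eq_of_entryRank_eq (hx.1.1.trans hx.2.1.symm))

lemma l1BallModConst_ae_eq_iUnion_rankCell :
    l1BallModConst ι =ᵐ[volume] ⋃ k, rankCell (Fintype.card ι / 2) k := by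
  refine Filter.eventuallyEq_set.2 ?_
  filter_upwards [ae_injective_zeroExtend] with x hx
  rw [Set.mem_iUnion]
  constructor
  · rintro ⟨t, ht⟩
    obtain ⟨k, hk⟩ := exists_entryRank_eq hx (m := Fintype.card ι / 2)
      (by rw [Fintype.card_option]; lia)
    refine ⟨k, hk, (sum_abs_sub_le_of_entryRank ?_ ?_ t).trans ht⟩ <;>
      (rw [hk, Fintype.card_option]; lia)
  · rintro ⟨k, -, hk⟩
    exact ⟨_, hk⟩

lemma volume_l1BallModConst : volume (l1BallModConst ι) =
    (Fintype.card ι + 1) *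
      ((Fintype.card ι).choose (Fintype.card ι / 2) * ((Fintype.card ι)! : ℝ≥0∞)⁻¹) := by
  rw [measure_congr l1BallModConst_ae_eq_iUnion_rankCell,
    measure_iUnion₀ (fun _ _ => aedisjoint_rankCell)
      fun k => (measurableSet_rankCell _ k).nullMeasurableSet,
    tsum_fintype]
  simp [volume_rankCell]

end Cells

section ConvexHull

lemma sum_smul_mem_of_sum_le_one {𝕜 κ E : Type*} [Field 𝕜] [LinearOrder 𝕜] [IsStrictOrderedRing 𝕜]
    [Fintype κ] [AddCommGroup E] [Module 𝕜 E] {s : Set E} (hs : Convex 𝕜 s) (h0 : (0 : E) ∈ s)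
    {w : κ → 𝕜} {z : κ → E} (hw : ∀ i, 0 ≤ w i) (hw1 : ∑ i, w i ≤ 1) (hz : ∀ i, z i ∈ s) :
    ∑ i, w i • z i ∈ s := by
  have hmem : ∑ o : Option κ, (o.elim (1 - ∑ i, w i) w) • (o.elim 0 z) ∈ s := by
    refine hs.sum_mem ?_ (by simp [Fintype.sum_option]) ?_
    · rintro (_ | i) -
      exacts [sub_nonneg.2 hw1, hw i]
    · rintro (_ | i) -
      exacts [h0, hz i]
  simpa [Fintype.sum_option] using hmem

lemma convexHull_insert_zero_pm {κ E : Type*} [Fintype κ] [AddCommGroup E] [Module ℝ E]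
    (d : κ → E) :
    convexHull ℝ (insert 0 {x | ∃ i, x = d i ∨ x = -d i}) =
      Fintype.linearCombination ℝ d '' l1Ball κ := by
  classical
  refine (convexHull_min ?_ (convex_l1Ball.linear_image _)).antisymm ?_
  · rintro _ (rfl | ⟨i, rfl | rfl⟩)
    · exact ⟨0, by simp [l1Ball], map_zero _⟩
    · exact ⟨Pi.single i 1, by simp [l1Ball, Pi.single_apply, apply_ite abs], by simp⟩
    · exact ⟨-Pi.single i 1, by simp [l1Ball, Pi.single_apply, apply_ite abs], by simp⟩
  · rintro _ ⟨w, hw, rfl⟩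
    have hsign (i : κ) : (SignType.sign (w i) : ℝ) • d i ∈
        insert 0 {x | ∃ i, x = d i ∨ x = -d i} := by
      rcases lt_trichotomy (w i) 0 with h | h | h
      · exact Or.inr ⟨i, Or.inr (by simp [h])⟩
      · exact Or.inl (by simp [h])
      · exact Or.inr ⟨i, Or.inl (by simp [h])⟩
    have hw_eq : Fintype.linearCombination ℝ d w =
        ∑ i, |w i| • (SignType.sign (w i) : ℝ) • d i := by
      simp only [Fintype.linearCombination_apply, smul_smul, abs_mul_sign]
    rw [hw_eq]
    exact sum_smul_mem_of_sum_le_one (convex_convexHull ℝ _)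
      (subset_convexHull ℝ _ (Set.mem_insert _ _)) (fun i => abs_nonneg _) hw
      fun i => subset_convexHull ℝ _ (hsign i)

variable {ι : Type*} [Fintype ι]

lemma linearCombination_image_l1Ball_of_sum_eq_zero {E : Type*} [AddCommGroup E] [Module ℝ E]
    {d : Option ι → E} (hd : ∑ o, d o = 0) :
    Fintype.linearCombination ℝ d '' l1Ball (Option ι) =
      Fintype.linearCombination ℝ (d ∘ some) '' l1BallModConst ι := by
  have hshift (x : ι → ℝ) (t : ℝ) : Fintype.linearCombination ℝ (d ∘ some) x =
      Fintype.linearCombination ℝ d fun o => zeroExtend x o - t := by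
    simp [Fintype.linearCombination_apply, sub_smul, sum_sub_distrib, ← smul_sum, hd,
      Fintype.sum_option]
  ext v
  constructor
  · rintro ⟨w, hw, rfl⟩
    obtain ⟨x, t, rfl⟩ : ∃ (x : ι → ℝ) (t : ℝ), w = fun o => zeroExtend x o - t :=
      ⟨fun i => w (some i) - w none, -w none, by ext (_ | i) <;> simp⟩
    exact ⟨x, ⟨t, hw⟩, hshift x t⟩
  · rintro ⟨x, ⟨t, ht⟩, rfl⟩
    exact ⟨_, ht, (hshift x t).symm⟩

theorem volume_convexHull_insert_zero_pm_of_sum_eq_zero [DecidableEq ι]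
    {d : Option ι → ι → ℝ} (hd : ∑ o, d o = 0) :
    volume (convexHull ℝ (insert 0 {x | ∃ o, x = d o ∨ x = -d o})) =
      ENNReal.ofReal |(Matrix.of (d ∘ some)).det| * ((Fintype.card ι + 1) *
        ((Fintype.card ι).choose (Fintype.card ι / 2) * ((Fintype.card ι)! : ℝ≥0∞)⁻¹)) := by
  have hlin : Fintype.linearCombination ℝ (d ∘ some) =
      Matrix.toLin' (Matrix.of (d ∘ some)).transpose := by
    ext x i
    simp
  rw [convexHull_insert_zero_pm, linearCombination_image_l1Ball_of_sum_eq_zero hd,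
    Measure.addHaar_image_linearMap, hlin, LinearMap.det_toLin', Matrix.det_transpose,
    volume_l1BallModConst]

end ConvexHull

section Cycle

variable (n : ℕ)

/-- The vectors `e_{i-1} - e_i`, `1 ≤ i ≤ n + 1`, indexed by `Option (Fin n)`: the last one is
`none` and the others are shifted to start at `0`. -/
noncomputable def cycleVec (o : Option (Fin n)) : Fin n → ℝ :=
  dVec n (o.elim (n + 1) fun i => i + 1)

lemma Sconf_eq_insert_zero_pm_cycleVec :
    Sconf n (n + 1) = insert 0 {x | ∃ o, x = cycleVec n o ∨ x = -cycleVec n o} := by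
  have hindex (P : ℕ → Prop) : (∃ i ∈ Icc 1 (n + 1), P i) ↔
      ∃ o : Option (Fin n), P (o.elim (n + 1) fun i => i + 1) := by
    rw [Option.exists]
    constructor
    · rintro ⟨i, hi, hP⟩
      obtain ⟨h1, hle⟩ := mem_Icc.1 hi
      rcases hle.eq_or_lt with rfl | hlt
      · exact Or.inl hP
      · exact Or.inr ⟨⟨i - 1, by lia⟩, by simpa [Nat.sub_add_cancel h1] using hP⟩
    · rintro (hP | ⟨i, hP⟩)
      · exact ⟨n + 1, by simp, hP⟩
      · exact ⟨i + 1, by simp [i.isLt.le], hP⟩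
  simp only [Sconf, cycleVec, hindex]

lemma sum_cycleVec : ∑ o, cycleVec n o = 0 := by
  have htelescope : ∑ o, cycleVec n o = eVec n 0 - eVec n (n + 1) := by
    simp only [Fintype.sum_option, cycleVec, Option.elim]
    rw [Fin.sum_univ_eq_sum_range fun i => dVec n (i + 1), add_comm,
      ← sum_range_succ fun i => dVec n (i + 1)]
    exact sum_range_sub' (eVec n) (n + 1)
  rw [htelescope]
  ext t
  simp [eVec, t.isLt.ne]

lemma det_cycleVec : (Matrix.of (cycleVec n ∘ some)).det = (-1) ^ n := by
  rw [Matrix.det_of_isLowerTriangular]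
  · simp [cycleVec, dVec, eVec]
  · intro i j hij
    have hlt : (i : ℕ) < j := hij
    simp [cycleVec, dVec, eVec, hlt.ne']
    lia

end Cycle

theorem stmt16 (n N : ℕ) (hN : N = n + 1) (hN3 : 3 ≤ N) :
    (Nat.factorial n : ENNReal) * volume (convexHull ℝ (Sconf n N)) =
      ((N * Nat.choose (N - 1) ((N - 1) / 2) : ℕ) : ENNReal) := by
  subst hN
  rw [Sconf_eq_insert_zero_pm_cycleVec,
    volume_convexHull_insert_zero_pm_of_sum_eq_zero (sum_cycleVec n), det_cycleVec]
  have hfact : (n ! : ℝ≥0∞) * (n ! : ℝ≥0∞)⁻¹ = 1 :=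
    ENNReal.mul_inv_cancel (by simp [Nat.factorial_ne_zero]) (ENNReal.natCast_ne_top _)
  calc (n ! : ℝ≥0∞) * (ENNReal.ofReal |(-1) ^ n| * ((Fintype.card (Fin n) + 1) *
        ((Fintype.card (Fin n)).choose (Fintype.card (Fin n) / 2) *
          ((Fintype.card (Fin n))! : ℝ≥0∞)⁻¹)))
      = (n + 1) * n.choose (n / 2) * ((n ! : ℝ≥0∞) * (n ! : ℝ≥0∞)⁻¹) := by
        simp only [abs_neg_one_pow, ENNReal.ofReal_one, Fintype.card_fin]
        ring
    _ = ((n + 1) * (n + 1 - 1).choose ((n + 1 - 1) / 2) : ℕ) := by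
        simp [hfact]
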